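/- arXiv:math/0607050 — 7 statements merged into one kernel-verified Lean document; each statement's English description precedes it below -/
import Mathlib

section
/- In the Lyapunov–Perron setting, for every ξ ∈ H_c and every v ∈ C_η⁻ the function N(v, ξ) belongs to C_η⁻; moreover for all v, v̄ ∈ C_η⁻ and all ξ, ξ̄ ∈ H_c one has ‖N(v, ξ) − N(v̄, ξ)‖_η ≤ L·(1/(η+β) − 1/(α+η))·‖v − v̄‖_η and ‖N(v, ξ) − N(v, ξ̄)‖_η ≤ ‖ξ − ξ̄‖. -/
open MeasureTheory Set

theorem aux_joint {E : Type*} [NormedAddCommGroup E] [NormedSpace ℝ E]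
    (S : ℝ → E →L[ℝ] E) (hS : ∀ x, Continuous fun t => S t x) (b : ℝ → ℝ) (hb : Continuous b)
    (hbnd : ∀ t x, ‖S t x‖ ≤ b t * ‖x‖) : Continuous fun p : ℝ × E => S p.1 p.2 := by
  rw [continuous_iff_continuousAt]
  rintro ⟨t0, x0⟩
  have h1 : Filter.Tendsto (fun p : ℝ × E => S p.1 x0) (nhds (t0, x0)) (nhds (S t0 x0)) :=
    ((hS x0).comp continuous_fst).tendsto (t0, x0)
  have h2 : Filter.Tendsto (fun p : ℝ × E => S p.1 (p.2 - x0)) (nhds (t0, x0)) (nhds 0) := by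
    have h3 : Filter.Tendsto (fun p : ℝ × E => b p.1 * ‖p.2 - x0‖) (nhds (t0, x0)) (nhds 0) := by
      have : Continuous (fun p : ℝ × E => b p.1 * ‖p.2 - x0‖) := by fun_prop
      simpa using this.tendsto (t0, x0)
    exact squeeze_zero_norm (fun p => hbnd _ _) h3
  have h4 := h1.add h2
  simp only [map_sub, add_zero, add_sub_cancel] at h4
  exact h4

theorem aux_c_cont {E : Type*} [NormedAddCommGroup E] [NormedSpace ℝ E]
    (α : ℝ) (S : ℝ → E →L[ℝ] E) (hS : ∀ x, Continuous fun t => S t x)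
    (hbnd : ∀ t : ℝ, t ≤ 0 → ∀ x : E, ‖S t x‖ ≤ Real.exp (-α * t) * ‖x‖)
    (Z : ℝ → ℝ) (hZ : Continuous Z) (f : ℝ → E) (hf : ContinuousOn f (Iic 0)) :
    (∀ t ≤ 0, IntervalIntegrable (fun τ => Real.exp (Z t - Z τ) • S (t - τ) (f τ)) volume 0 t) ∧
    ContinuousOn (fun t => ∫ τ in (0:ℝ)..t, Real.exp (Z t - Z τ) • S (t - τ) (f τ)) (Iic 0) := by
  have hj : Continuous fun p : ℝ × E => S (min p.1 0) p.2 :=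
    aux_joint (fun t => S (min t 0)) (fun x => (hS x).comp (by fun_prop))
      (fun t => Real.exp (-α * min t 0)) (by fun_prop) (fun t x => hbnd _ (min_le_right _ _) x)
  have hf' : Continuous fun τ => f (min τ 0) :=
    hf.comp_continuous (by fun_prop) (fun x => mem_Iic.2 (min_le_right _ _))
  have hF : Continuous fun p : ℝ × ℝ =>
      Real.exp (Z p.1 - Z p.2) • S (min (p.1 - p.2) 0) (f (min p.2 0)) := by
    have h1 : Continuous fun p : ℝ × ℝ => S (min (p.1 - p.2) 0) (f (min p.2 0)) :=
      hj.comp (f := fun p : ℝ × ℝ => (p.1 - p.2, f (min p.2 0)))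
        ((by fun_prop : Continuous fun p : ℝ × ℝ => p.1 - p.2).prodMk (hf'.comp continuous_snd))
    exact (by fun_prop : Continuous fun p : ℝ × ℝ => Real.exp (Z p.1 - Z p.2)).smul h1
  have heq : ∀ t ≤ (0:ℝ), ∀ τ ∈ uIcc 0 t, 
      Real.exp (Z t - Z τ) • S (min (t - τ) 0) (f (min τ 0)) =
      Real.exp (Z t - Z τ) • S (t - τ) (f τ) := by
    intro t ht τ hτ
    rw [uIcc_of_ge ht] at hτ
    rw [min_eq_left hτ.2, min_eq_left (by linarith [hτ.1])]
  constructor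
  · intro t ht
    have h2 : Continuous fun τ => Real.exp (Z t - Z τ) • S (min (t - τ) 0) (f (min τ 0)) :=
      hF.comp (f := fun τ => (t, τ)) (by fun_prop)
    refine (h2.intervalIntegrable 0 t).congr (fun τ hτ => heq t ht τ (uIoc_subset_uIcc hτ))
  · have h3 := intervalIntegral.continuous_parametric_intervalIntegral_of_continuous (μ := volume)
      (f := fun t τ => Real.exp (Z t - Z τ) • S (min (t - τ) 0) (f (min τ 0))) (a₀ := 0)
      hF continuous_id
    refine h3.continuousOn.congr (fun t ht => ?_)
    exact (intervalIntegral.integral_congr (fun τ hτ => heq t ht τ hτ)).symm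

theorem aux_c_bnd {E : Type*} [NormedAddCommGroup E] [NormedSpace ℝ E]
    (α η : ℝ) (hη : η < -α) (S : ℝ → E →L[ℝ] E)
    (hbnd : ∀ t : ℝ, t ≤ 0 → ∀ x : E, ‖S t x‖ ≤ Real.exp (-α * t) * ‖x‖)
    (Z : ℝ → ℝ) (f : ℝ → E) (K : ℝ) (hK : 0 ≤ K)
    (hf : ∀ τ ≤ 0, ‖f τ‖ ≤ K * Real.exp (η * τ + Z τ)) (t : ℝ) (ht : t ≤ 0) :
    Real.exp (-η * t - Z t) * ‖∫ τ in (0:ℝ)..t, Real.exp (Z t - Z τ) • S (t - τ) (f τ)‖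
      ≤ K * (-(1 / (α + η))) := by
  have hne : α + η ≠ 0 := by linarith
  have h1 : ‖∫ τ in (0:ℝ)..t, Real.exp (Z t - Z τ) • S (t - τ) (f τ)‖ ≤
      ∫ τ in t..(0:ℝ), K * Real.exp (Z t - α * t) * Real.exp ((α + η) * τ) := by
    rw [intervalIntegral.integral_symm, norm_neg]
    refine intervalIntegral.norm_integral_le_of_norm_le ht (Filter.Eventually.of_forall ?_)
      (Continuous.intervalIntegrable (by fun_prop) _ _)
    intro τ hτ
    rw [norm_smul, Real.norm_eq_abs, abs_of_pos (Real.exp_pos _)]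
    calc _ ≤ Real.exp (Z t - Z τ) * (Real.exp (-α * (t - τ)) * (K * Real.exp (η * τ + Z τ))) := by
          gcongr
          exact (hbnd _ (by linarith [hτ.1]) _).trans (by gcongr; exact hf τ hτ.2)
      _ = K * (Real.exp (Z t - Z τ) * Real.exp (-α * (t - τ)) * Real.exp (η * τ + Z τ)) := by ring
      _ = K * (Real.exp (Z t - α * t) * Real.exp ((α + η) * τ)) := by
          rw [← Real.exp_add, ← Real.exp_add, ← Real.exp_add]; ring_nf
      _ = _ := by ring
  have h2 : ∫ τ in t..(0:ℝ), Real.exp ((α + η) * τ) = (1 - Real.exp ((α + η) * t)) / (α + η) := by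
    rw [intervalIntegral.integral_comp_mul_left (fun x => Real.exp x) hne, integral_exp]
    simp; field_simp
  rw [intervalIntegral.integral_const_mul, h2] at h1
  calc _ ≤ Real.exp (-η * t - Z t) * (K * Real.exp (Z t - α * t) *
        ((1 - Real.exp ((α + η) * t)) / (α + η))) := by gcongr
    _ = K * (Real.exp (-η * t - Z t) * Real.exp (Z t - α * t) * (1 - Real.exp ((α + η) * t))
          / (α + η)) := by ring
    _ = K * ((Real.exp (-(α + η) * t) - 1) / (α + η)) := by
        rw [mul_sub, ← Real.exp_add, mul_one, ← Real.exp_add]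
        congr 3
        · ring_nf
        · rw [← Real.exp_zero]; ring_nf
    _ = K * ((Real.exp (-(α + η) * t) - 1) * (1 / (α + η))) := by ring
    _ ≤ _ := by
        gcongr
        have : 1 / (α + η) < 0 := one_div_neg.2 (by linarith)
        nlinarith [Real.exp_pos (-(α + η) * t)]

theorem aux_subst {E : Type*} [NormedAddCommGroup E] [NormedSpace ℝ E] (F : ℝ → E) (t : ℝ) :
    (∫ τ in Iic t, F τ = ∫ r in Ici (0:ℝ), F (t - r)) ∧
    (IntegrableOn F (Iic t) ↔ IntegrableOn (fun r => F (t - r)) (Ici (0:ℝ))) := by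
  have hmp : MeasurePreserving (fun r : ℝ => t - r) volume volume :=
    Measure.measurePreserving_sub_left volume t
  have hme : MeasurableEmbedding (fun r : ℝ => t - r) :=
    (MeasurableEquiv.subLeft t).measurableEmbedding
  have hpre : (fun r : ℝ => t - r) ⁻¹' Iic t = Ici 0 := by ext; simp
  constructor
  · rw [← hpre, hmp.setIntegral_preimage_emb hme]
  · rw [← hpre]; exact (hmp.integrableOn_comp_preimage hme).symm

theorem aux_exp {c : ℝ} (hc : 0 < c) (K : ℝ) :
    IntegrableOn (fun r => K * Real.exp (-c * r)) (Ici 0) ∧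
    ∫ r in Ici (0:ℝ), K * Real.exp (-c * r) = K * (1 / c) := by
  constructor
  · rw [integrableOn_Ici_iff_integrableOn_Ioi]
    exact (integrableOn_exp_mul_Ioi (by linarith) 0).const_mul K
  · rw [integral_Ici_eq_integral_Ioi, integral_const_mul, integral_exp_mul_Ioi (by linarith)]
    simp

theorem aux_s_pt {E : Type*} [NormedAddCommGroup E] [NormedSpace ℝ E]
    (β η : ℝ) (S : ℝ → E →L[ℝ] E)
    (hbnd : ∀ t : ℝ, 0 ≤ t → ∀ x : E, ‖S t x‖ ≤ Real.exp (-β * t) * ‖x‖)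
    (Z : ℝ → ℝ) (f : ℝ → E) (K : ℝ)
    (hf : ∀ τ ≤ 0, ‖f τ‖ ≤ K * Real.exp (η * τ + Z τ)) (t : ℝ) (ht : t ≤ 0) (r : ℝ) (hr : 0 ≤ r) :
    ‖Real.exp (-η * t - Z t) • Real.exp (Z t - Z (t - r)) • S r (f (t - r))‖
      ≤ K * Real.exp (-(η + β) * r) := by
  rw [norm_smul, norm_smul, Real.norm_eq_abs, Real.norm_eq_abs, abs_of_pos (Real.exp_pos _),
    abs_of_pos (Real.exp_pos _)]
  calc _ ≤ Real.exp (-η * t - Z t) * (Real.exp (Z t - Z (t - r)) *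
        (Real.exp (-β * r) * (K * Real.exp (η * (t - r) + Z (t - r))))) := by
        gcongr
        exact (hbnd _ hr _).trans (by gcongr; exact hf _ (by linarith))
    _ = K * (Real.exp (-η * t - Z t) * Real.exp (Z t - Z (t - r)) *
        Real.exp (-β * r) * Real.exp (η * (t - r) + Z (t - r))) := by ring
    _ = _ := by
        rw [← Real.exp_add, ← Real.exp_add, ← Real.exp_add]; ring_nf

theorem aux_s_bnd {E : Type*} [NormedAddCommGroup E] [NormedSpace ℝ E]
    (β η : ℝ) (hη : -β < η) (S : ℝ → E →L[ℝ] E)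
    (hbnd : ∀ t : ℝ, 0 ≤ t → ∀ x : E, ‖S t x‖ ≤ Real.exp (-β * t) * ‖x‖)
    (Z : ℝ → ℝ) (f : ℝ → E) (K : ℝ)
    (hf : ∀ τ ≤ 0, ‖f τ‖ ≤ K * Real.exp (η * τ + Z τ)) (t : ℝ) (ht : t ≤ 0) :
    Real.exp (-η * t - Z t) * ‖∫ τ in Iic t, Real.exp (Z t - Z τ) • S (t - τ) (f τ)‖
      ≤ K * (1 / (η + β)) := by
  rw [(aux_subst _ t).1, ← abs_of_pos (Real.exp_pos (-η * t - Z t)), ← Real.norm_eq_abs,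
    ← norm_smul, ← integral_smul, ← (aux_exp (by linarith : 0 < η + β) K).2]
  refine norm_integral_le_of_norm_le (aux_exp (by linarith : 0 < η + β) K).1 ?_
  refine (ae_restrict_iff' measurableSet_Ici).2 (Filter.Eventually.of_forall fun r hr => ?_)
  simp only [sub_sub_cancel]
  exact aux_s_pt β η S hbnd Z f K hf t ht r hr

theorem aux_s_cont {E : Type*} [NormedAddCommGroup E] [NormedSpace ℝ E]
    (β η : ℝ) (hη : -β < η) (S : ℝ → E →L[ℝ] E)
    (hS : ∀ x : E, ContinuousOn (fun t => S t x) (Ici 0))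
    (hbnd : ∀ t : ℝ, 0 ≤ t → ∀ x : E, ‖S t x‖ ≤ Real.exp (-β * t) * ‖x‖)
    (Z : ℝ → ℝ) (hZ : Continuous Z) (f : ℝ → E) (hfc : ContinuousOn f (Iic 0)) (K : ℝ)
    (hf : ∀ τ ≤ 0, ‖f τ‖ ≤ K * Real.exp (η * τ + Z τ)) :
    (∀ t ≤ 0, IntegrableOn (fun τ => Real.exp (Z t - Z τ) • S (t - τ) (f τ)) (Iic t)) ∧
    ContinuousOn (fun t => ∫ τ in Iic t, Real.exp (Z t - Z τ) • S (t - τ) (f τ)) (Iic 0) := by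
  have hj : Continuous fun p : ℝ × E => S (max p.1 0) p.2 :=
    aux_joint (fun t => S (max t 0))
      (fun x => (hS x).comp_continuous (by fun_prop) (fun _ => mem_Ici.2 (le_max_right _ _)))
      (fun t => Real.exp (-β * max t 0)) (by fun_prop) (fun t x => hbnd _ (le_max_right _ _) x)
  have hf' : Continuous fun τ => f (min τ 0) :=
    hfc.comp_continuous (by fun_prop) (fun x => mem_Iic.2 (min_le_right _ _))
  have hF : Continuous fun p : ℝ × ℝ => Real.exp (-η * p.1 - Z p.1) •
      Real.exp (Z p.1 - Z (p.1 - p.2)) • S (max p.2 0) (f (min (p.1 - p.2) 0)) := by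
    have h1 : Continuous fun p : ℝ × ℝ => S (max p.2 0) (f (min (p.1 - p.2) 0)) :=
      hj.comp (f := fun p : ℝ × ℝ => (p.2, f (min (p.1 - p.2) 0)))
        (continuous_snd.prodMk
          (hf'.comp (by fun_prop : Continuous fun p : ℝ × ℝ => p.1 - p.2)))
    exact (by fun_prop : Continuous fun p : ℝ × ℝ => Real.exp (-η * p.1 - Z p.1)).smul
      ((by fun_prop : Continuous fun p : ℝ × ℝ => Real.exp (Z p.1 - Z (p.1 - p.2))).smul h1)
  have heq : ∀ t ≤ (0:ℝ), ∀ r ∈ Ici (0:ℝ), Real.exp (-η * t - Z t) •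
      Real.exp (Z t - Z (t - r)) • S (max r 0) (f (min (t - r) 0)) = Real.exp (-η * t - Z t) •
      Real.exp (Z t - Z (t - r)) • S r (f (t - r)) := by
    intro t ht r hr
    rw [max_eq_left hr, min_eq_left (by linarith [mem_Ici.1 hr])]
  have hmeas : ∀ t ≤ (0:ℝ), AEStronglyMeasurable (fun r => Real.exp (-η * t - Z t) •
      Real.exp (Z t - Z (t - r)) • S r (f (t - r))) (volume.restrict (Ici 0)) := by
    intro t ht
    have h2 : ContinuousOn (fun r => Real.exp (-η * t - Z t) •
      Real.exp (Z t - Z (t - r)) • S r (f (t - r))) (Ici 0) :=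
      ((hF.comp (f := fun r => (t, r)) (by fun_prop)).continuousOn).congr
        (fun r hr => (heq t ht r hr).symm)
    exact h2.aestronglyMeasurable measurableSet_Ici
  have hle : ∀ t ≤ (0:ℝ), ∀ᵐ r ∂(volume.restrict (Ici (0:ℝ))), ‖Real.exp (-η * t - Z t) •
      Real.exp (Z t - Z (t - r)) • S r (f (t - r))‖ ≤ K * Real.exp (-(η + β) * r) := by
    intro t ht
    exact (ae_restrict_iff' measurableSet_Ici).2 (Filter.Eventually.of_forall fun r hr =>
      aux_s_pt β η S hbnd Z f K hf t ht r hr)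
  have hint := (aux_exp (by linarith : 0 < η + β) K).1
  have hinv : ∀ (t : ℝ) (x : E), Real.exp (η * t + Z t) • Real.exp (-η * t - Z t) • x = x := by
    intro t x
    rw [smul_smul, ← Real.exp_add]; ring_nf; simp
  constructor
  · intro t ht
    rw [(aux_subst _ t).2]
    simp only [sub_sub_cancel]
    have h3 : IntegrableOn (fun r => Real.exp (-η * t - Z t) •
      Real.exp (Z t - Z (t - r)) • S r (f (t - r))) (Ici 0) :=
      hint.mono' (hmeas t ht) (hle t ht)
    have h4 := h3.smul (Real.exp (η * t + Z t))
    refine h4.congr (Filter.Eventually.of_forall fun r => ?_)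
    exact hinv _ _
  · have h5 : ContinuousOn (fun t => ∫ r in Ici (0:ℝ), Real.exp (-η * t - Z t) •
      Real.exp (Z t - Z (t - r)) • S r (f (t - r))) (Iic 0) := by
      refine continuousOn_of_dominated (fun t ht => hmeas t ht) (fun t ht => hle t ht) hint ?_
      refine (ae_restrict_iff' measurableSet_Ici).2 (Filter.Eventually.of_forall fun r hr => ?_)
      exact ((hF.comp (f := fun t => (t, r)) (by fun_prop)).continuousOn).congr
        (fun t ht => (heq t ht r hr).symm)
    have h6 : ContinuousOn (fun t => Real.exp (η * t + Z t)) (Iic 0) := by fun_prop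
    refine (h6.smul h5).congr (fun t ht => ?_)
    simp only [(aux_subst (fun τ => Real.exp (Z t - Z τ) • S (t - τ) (f τ)) t).1, sub_sub_cancel]
    rw [Pi.smul_apply', integral_smul, hinv]

theorem aux_norm {A B : Type*} [NormedAddCommGroup A] [NormedAddCommGroup B] (a : A) (b : B) :
    ‖(WithLp.equiv 2 (A × B)).symm (a, b)‖ ≤ ‖a‖ + ‖b‖ := by
  rw [WithLp.prod_norm_eq_of_L2]
  refine Real.sqrt_le_iff.2 ⟨by positivity, ?_⟩
  simp
  nlinarith [mul_nonneg (norm_nonneg a) (norm_nonneg b)]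

/-- The Lyapunov–Perron operator `N` maps the weighted space `C_η⁻` into itself, is a
contraction with constant `L·(1/(η+β) − 1/(α+η))` in its first argument, and is
`1`-Lipschitz in the boundary value `ξ`. Here `H = H_c ×₂ H_s`, `S_c` is the group on
the center part with `‖S_c(t)x‖ ≤ e^{−αt}‖x‖` for `t ≤ 0`, `S_s` the stable semigroup
with `‖S_s(t)x‖ ≤ e^{−βt}‖x‖` for `t ≥ 0`, and `g_c, g_s` are the nonlinearities,
vanishing at `0` and `L`-Lipschitz uniformly in time. -/
theorem stmt_1
    {Hc Hs : Type*}
    [NormedAddCommGroup Hc] [InnerProductSpace ℝ Hc] [CompleteSpace Hc]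
    [TopologicalSpace.SeparableSpace Hc]
    [NormedAddCommGroup Hs] [InnerProductSpace ℝ Hs] [CompleteSpace Hs]
    [TopologicalSpace.SeparableSpace Hs]
    (α β η : ℝ) (hα : 0 ≤ α) (hαβ : α < β) (hη1 : -β < η) (hη2 : η < -α)
    (Sc : ℝ → Hc →L[ℝ] Hc)
    (hSc0 : Sc 0 = ContinuousLinearMap.id ℝ Hc)
    (hScgrp : ∀ s t : ℝ, Sc (s + t) = (Sc s).comp (Sc t))
    (hSccont : ∀ x : Hc, Continuous fun t => Sc t x)
    (hScbnd : ∀ t : ℝ, t ≤ 0 → ∀ x : Hc, ‖Sc t x‖ ≤ Real.exp (-α * t) * ‖x‖)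
    (Ss : ℝ → Hs →L[ℝ] Hs)
    (hSs0 : Ss 0 = ContinuousLinearMap.id ℝ Hs)
    (hSsgrp : ∀ s t : ℝ, 0 ≤ s → 0 ≤ t → Ss (s + t) = (Ss s).comp (Ss t))
    (hSscont : ∀ x : Hs, ContinuousOn (fun t => Ss t x) (Ici 0))
    (hSsbnd : ∀ t : ℝ, 0 ≤ t → ∀ x : Hs, ‖Ss t x‖ ≤ Real.exp (-β * t) * ‖x‖)
    (z : ℝ → ℝ) (hz : Continuous z)
    (L : ℝ) (hL : 0 ≤ L)
    (gc : ℝ → WithLp 2 (Hc × Hs) → Hc)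
    (gs : ℝ → WithLp 2 (Hc × Hs) → Hs)
    (hgcCont : Continuous fun p : ℝ × WithLp 2 (Hc × Hs) => gc p.1 p.2)
    (hgsCont : Continuous fun p : ℝ × WithLp 2 (Hc × Hs) => gs p.1 p.2)
    (hgc0 : ∀ t : ℝ, gc t 0 = 0) (hgs0 : ∀ t : ℝ, gs t 0 = 0)
    (hgcLip : ∀ (t : ℝ) (x y : WithLp 2 (Hc × Hs)), ‖gc t x - gc t y‖ ≤ L * ‖x - y‖)
    (hgsLip : ∀ (t : ℝ) (x y : WithLp 2 (Hc × Hs)), ‖gs t x - gs t y‖ ≤ L * ‖x - y‖)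
    -- membership in the weighted space `C_η⁻` of continuous functions on `(−∞,0]`
    (memC : (ℝ → WithLp 2 (Hc × Hs)) → Prop)
    (hmemC : ∀ v, memC v ↔ ContinuousOn v (Iic 0) ∧
      BddAbove ((fun t => Real.exp (-η * t - ∫ s in (0:ℝ)..t, z s) * ‖v t‖) '' Iic 0))
    -- the norm of `C_η⁻`
    (normEta : (ℝ → WithLp 2 (Hc × Hs)) → ℝ)
    (hnormEta : ∀ v, normEta v =
      sSup ((fun t => Real.exp (-η * t - ∫ s in (0:ℝ)..t, z s) * ‖v t‖) '' Iic 0))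
    -- the Lyapunov–Perron map
    (N : (ℝ → WithLp 2 (Hc × Hs)) → Hc → ℝ → WithLp 2 (Hc × Hs))
    (hN : ∀ v ξ t, N v ξ t = (WithLp.equiv 2 (Hc × Hs)).symm
      (Real.exp (∫ s in (0:ℝ)..t, z s) • Sc t ξ +
        ∫ τ in (0:ℝ)..t, Real.exp (∫ s in τ..t, z s) • Sc (t - τ) (gc τ (v τ)),
       ∫ τ in Iic t, Real.exp (∫ s in τ..t, z s) • Ss (t - τ) (gs τ (v τ)))) :
    -- `N(·, ξ)` maps `C_η⁻` to itself
    (∀ (ξ : Hc) (v : ℝ → WithLp 2 (Hc × Hs)), memC v → memC (N v ξ)) ∧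
    -- contraction estimate in `v`
    (∀ (ξ : Hc) (v w : ℝ → WithLp 2 (Hc × Hs)), memC v → memC w →
      normEta (fun t => N v ξ t - N w ξ t) ≤
        L * (1 / (η + β) - 1 / (α + η)) * normEta (fun t => v t - w t)) ∧
    -- Lipschitz estimate in `ξ`
    (∀ (ξ ξ' : Hc) (v : ℝ → WithLp 2 (Hc × Hs)), memC v →
      normEta (fun t => N v ξ t - N v ξ' t) ≤ ‖ξ - ξ'‖) := by
  obtain ⟨Z, hZdef⟩ : ∃ Z : ℝ → ℝ, Z = fun t => ∫ s in (0:ℝ)..t, z s := ⟨_, rfl⟩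
  have hZ0 : ∀ t, ∫ s in (0:ℝ)..t, z s = Z t := fun t => by rw [hZdef]
  have hZ : Continuous Z := by
    rw [hZdef]
    exact intervalIntegral.continuous_primitive (fun a b => hz.intervalIntegrable a b) 0
  have hZ1 : ∀ τ t, ∫ s in τ..t, z s = Z t - Z τ := fun τ t => by
    rw [hZdef]
    exact (intervalIntegral.integral_interval_sub_left (hz.intervalIntegrable _ _)
      (hz.intervalIntegrable _ _)).symm
  simp only [hZ0] at hmemC hnormEta
  simp only [hZ0, hZ1] at hN
  -- pointwise bound from membership
  have hpt : ∀ u : ℝ → WithLp 2 (Hc × Hs),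
      BddAbove ((fun t => Real.exp (-η * t - Z t) * ‖u t‖) '' Iic 0) →
      0 ≤ normEta u ∧ ∀ τ ≤ 0, ‖u τ‖ ≤ normEta u * Real.exp (η * τ + Z τ) := by
    intro u hu
    have h1 : ∀ τ ≤ 0, Real.exp (-η * τ - Z τ) * ‖u τ‖ ≤ normEta u := fun τ hτ => by
      rw [hnormEta]; exact le_csSup hu ⟨τ, hτ, rfl⟩
    refine ⟨le_trans (by positivity) (h1 0 le_rfl), fun τ hτ => ?_⟩
    calc ‖u τ‖ = (Real.exp (-η * τ - Z τ) * ‖u τ‖) * Real.exp (η * τ + Z τ) := by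
          rw [mul_right_comm, ← Real.exp_add]; ring_nf; simp
      _ ≤ _ := by gcongr; exact h1 τ hτ
  have hgcc : ∀ v, memC v → ContinuousOn (fun τ => gc τ (v τ)) (Iic 0) := fun v hv =>
    hgcCont.comp_continuousOn (continuousOn_id.prodMk ((hmemC v).1 hv).1)
  have hgsc : ∀ v, memC v → ContinuousOn (fun τ => gs τ (v τ)) (Iic 0) := fun v hv =>
    hgsCont.comp_continuousOn (continuousOn_id.prodMk ((hmemC v).1 hv).1)
  have hgcb : ∀ v, memC v → ∀ τ ≤ 0,
      ‖gc τ (v τ)‖ ≤ L * normEta v * Real.exp (η * τ + Z τ) := fun v hv τ hτ => by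
    have h1 := hgcLip τ (v τ) 0
    rw [hgc0, sub_zero, sub_zero] at h1
    rw [mul_assoc]
    exact h1.trans (mul_le_mul_of_nonneg_left ((hpt v ((hmemC v).1 hv).2).2 τ hτ) hL)
  have hgsb : ∀ v, memC v → ∀ τ ≤ 0,
      ‖gs τ (v τ)‖ ≤ L * normEta v * Real.exp (η * τ + Z τ) := fun v hv τ hτ => by
    have h1 := hgsLip τ (v τ) 0
    rw [hgs0, sub_zero, sub_zero] at h1
    rw [mul_assoc]
    exact h1.trans (mul_le_mul_of_nonneg_left ((hpt v ((hmemC v).1 hv).2).2 τ hτ) hL)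
  have hlin : ∀ t ≤ 0, ∀ ξ : Hc,
      Real.exp (-η * t - Z t) * ‖Real.exp (Z t) • Sc t ξ‖ ≤ ‖ξ‖ := by
    intro t ht ξ
    rw [norm_smul, Real.norm_eq_abs, abs_of_pos (Real.exp_pos _)]
    calc _ ≤ Real.exp (-η * t - Z t) * (Real.exp (Z t) * (Real.exp (-α * t) * ‖ξ‖)) := by
          gcongr; exact hScbnd t ht ξ
      _ = Real.exp (-(α + η) * t) * ‖ξ‖ := by
          rw [← mul_assoc, ← mul_assoc, ← Real.exp_add, ← Real.exp_add]; ring_nf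
      _ ≤ 1 * ‖ξ‖ := by
          gcongr
          rw [Real.exp_le_one_iff]
          nlinarith
      _ = _ := one_mul _
  have hsup : ∀ (u : ℝ → WithLp 2 (Hc × Hs)) (C : ℝ),
      (∀ t ≤ 0, Real.exp (-η * t - Z t) * ‖u t‖ ≤ C) → normEta u ≤ C := by
    intro u C h
    rw [hnormEta]
    refine csSup_le ⟨_, 0, mem_Iic.2 le_rfl, rfl⟩ ?_
    rintro _ ⟨t, ht, rfl⟩
    exact h t ht
  refine ⟨?_, ?_, ?_⟩
  · intro ξ v hv
    obtain ⟨hM, -⟩ := hpt v ((hmemC v).1 hv).2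
    rw [hmemC]
    constructor
    · have h1 := (aux_c_cont α Sc hSccont hScbnd Z hZ _ (hgcc v hv)).2
      have h2 := (aux_s_cont β η hη1 Ss hSscont hSsbnd Z hZ _ (hgsc v hv) _ (hgsb v hv)).2
      have h3 : ContinuousOn (fun t => Real.exp (Z t) • Sc t ξ) (Iic 0) :=
        ((Real.continuous_exp.comp hZ).smul (hSccont ξ)).continuousOn
      have h4 := (h3.add h1).prodMk h2
      exact ((WithLp.prod_continuous_toLp 2 Hc Hs).comp_continuousOn h4).congr
        (fun t _ => hN v ξ t)
    · refine ⟨‖ξ‖ + L * normEta v * (-(1 / (α + η))) + L * normEta v * (1 / (η + β)), ?_⟩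
      rintro _ ⟨t, ht, rfl⟩
      have h1 := aux_c_bnd α η hη2 Sc hScbnd Z _ _ (mul_nonneg hL hM) (hgcb v hv) t ht
      have h2 := aux_s_bnd β η hη1 Ss hSsbnd Z _ _ (hgsb v hv) t ht
      have h3 := hlin t ht ξ
      refine le_trans ?_ (add_le_add (add_le_add h3 h1) h2)
      rw [← mul_add, ← mul_add]
      simp only [hN]
      gcongr
      exact (aux_norm _ _).trans (by gcongr; exact norm_add_le _ _)
  · intro ξ v w hv hw
    have hb : BddAbove ((fun t => Real.exp (-η * t - Z t) * ‖v t - w t‖) '' Iic 0) := by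
      obtain ⟨a, ha⟩ := ((hmemC v).1 hv).2
      obtain ⟨b, hb⟩ := ((hmemC w).1 hw).2
      refine ⟨a + b, ?_⟩
      rintro _ ⟨t, ht, rfl⟩
      refine le_trans ?_ (add_le_add (ha ⟨t, ht, rfl⟩) (hb ⟨t, ht, rfl⟩))
      simp only
      rw [← mul_add]
      gcongr
      exact norm_sub_le _ _
    obtain ⟨hM, hMb⟩ := hpt (fun t => v t - w t) hb
    apply hsup
    intro t ht
    have hcb : ∀ τ ≤ 0, ‖gc τ (v τ) - gc τ (w τ)‖ ≤
        L * normEta (fun t => v t - w t) * Real.exp (η * τ + Z τ) := fun τ hτ => by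
      rw [mul_assoc]
      exact (hgcLip _ _ _).trans (mul_le_mul_of_nonneg_left (hMb τ hτ) hL)
    have hsb : ∀ τ ≤ 0, ‖gs τ (v τ) - gs τ (w τ)‖ ≤
        L * normEta (fun t => v t - w t) * Real.exp (η * τ + Z τ) := fun τ hτ => by
      rw [mul_assoc]
      exact (hgsLip _ _ _).trans (mul_le_mul_of_nonneg_left (hMb τ hτ) hL)
    have h1 := aux_c_bnd α η hη2 Sc hScbnd Z _ _ (mul_nonneg hL hM) hcb t ht
    have h2 := aux_s_bnd β η hη1 Ss hSsbnd Z _ _ hsb t ht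
    simp only [map_sub, smul_sub] at h1 h2
    rw [intervalIntegral.integral_sub
      ((aux_c_cont α Sc hSccont hScbnd Z hZ _ (hgcc v hv)).1 t ht)
      ((aux_c_cont α Sc hSccont hScbnd Z hZ _ (hgcc w hw)).1 t ht)] at h1
    rw [integral_sub
      ((aux_s_cont β η hη1 Ss hSscont hSsbnd Z hZ _ (hgsc v hv) _ (hgsb v hv)).1 t ht)
      ((aux_s_cont β η hη1 Ss hSscont hSsbnd Z hZ _ (hgsc w hw) _ (hgsb w hw)).1 t ht)] at h2
    have h3 : L * (1 / (η + β) - 1 / (α + η)) * normEta (fun t => v t - w t) =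
      L * normEta (fun t => v t - w t) * (-(1 / (α + η))) +
      L * normEta (fun t => v t - w t) * (1 / (η + β)) := by ring
    rw [h3]
    refine le_trans ?_ (add_le_add h1 h2)
    rw [← mul_add]
    gcongr
    refine le_trans (le_of_eq ?_) (aux_norm _ _)
    rw [hN, hN]
    congr 1
    refine (WithLp.toLp_sub 2 _ _).symm.trans ?_
    rw [Prod.mk_sub_mk, add_sub_add_left_eq_sub]
    rfl
  · intro ξ ξ' v hv
    apply hsup
    intro t ht
    refine le_trans ?_ (hlin t ht (ξ - ξ'))
    gcongr
    have h := aux_norm (Real.exp (Z t) • Sc t (ξ - ξ')) (0 : Hs)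
    rw [norm_zero, add_zero] at h
    refine le_trans (le_of_eq ?_) h
    rw [hN, hN]
    congr 1
    refine (WithLp.toLp_sub 2 _ _).symm.trans ?_
    rw [Prod.mk_sub_mk, add_sub_add_right_eq_sub, sub_self, map_sub, smul_sub]
    rfl
end

section
/- Let α, β ∈ ℝ, L ≥ 0, δ > 0, let z : [0,T] → ℝ, and let P, Q : [0,T] → ℝ be differentiable with P(t) > 0 and Q(t) ≥ 0 for all t ∈ [0,T], satisfying for every t ∈ [0,T]: (1/2)P'(t) ≥ (−α + z(t) − L)·P(t) − L·√(P(t)Q(t)) and (1/2)Q'(t) ≤ (−β + z(t) + L)·Q(t) + L·√(P(t)Q(t)). If α − β + 2L + δL + δ^{−1}L < 0 and Q(0) ≤ δ²·P(0), then Q(t) ≤ δ²·P(t) for all t ∈ [0,T] (cone invariance: once the difference of two solutions lies in the cone ‖q‖ ≤ δ‖p‖, it cannot leave it). -/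
/-- Cone invariance: once the difference of two solutions lies in the cone
`‖q‖ ≤ δ‖p‖`, it cannot leave it. -/
theorem stmt_4 (α β L δ T : ℝ) (hL : 0 ≤ L) (hδ : 0 < δ) (hT : 0 ≤ T)
    (z P Q P' Q' : ℝ → ℝ)
    (hP : ∀ t ∈ Set.Icc 0 T, HasDerivAt P (P' t) t)
    (hQ : ∀ t ∈ Set.Icc 0 T, HasDerivAt Q (Q' t) t)
    (hPpos : ∀ t ∈ Set.Icc 0 T, 0 < P t)
    (hQnn : ∀ t ∈ Set.Icc 0 T, 0 ≤ Q t)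
    (hP' : ∀ t ∈ Set.Icc 0 T,
      (1 / 2) * P' t ≥ (-α + z t - L) * P t - L * Real.sqrt (P t * Q t))
    (hQ' : ∀ t ∈ Set.Icc 0 T,
      (1 / 2) * Q' t ≤ (-β + z t + L) * Q t + L * Real.sqrt (P t * Q t))
    (hsmall : α - β + 2 * L + δ * L + δ⁻¹ * L < 0)
    (h0 : Q 0 ≤ δ ^ 2 * P 0) :
    ∀ t ∈ Set.Icc 0 T, Q t ≤ δ ^ 2 * P t := by
  intro t ht
  refine image_le_of_deriv_right_lt_deriv_boundary' (f := Q) (f' := Q')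
    (B := fun t => δ ^ 2 * P t) (B' := fun t => δ ^ 2 * P' t)
    (fun x hx => (hQ x hx).continuousAt.continuousWithinAt)
    (fun x hx => (hQ x ⟨hx.1, hx.2.le⟩).hasDerivWithinAt) h0
    (fun x hx => ((hP x hx).const_mul (δ ^ 2)).continuousAt.continuousWithinAt)
    (fun x hx => ((hP x ⟨hx.1, hx.2.le⟩).const_mul (δ ^ 2)).hasDerivWithinAt) ?_ ht
  intro x hx hxe
  have hx' : x ∈ Set.Icc 0 T := ⟨hx.1, hx.2.le⟩
  have hp := hPpos x hx'
  have h1 := hP' x hx'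
  have h2 := hQ' x hx'
  have hs : Real.sqrt (P x * Q x) = δ * P x := by
    rw [show P x * Q x = (δ * P x) ^ 2 by rw [hxe]; ring]
    exact Real.sqrt_sq (by positivity)
  rw [hs] at h1 h2
  rw [hxe] at h2
  have h3 := mul_le_mul_of_nonneg_left h1 (sq_nonneg δ)
  have h4 := mul_neg_of_pos_of_neg (show 0 < δ ^ 2 * P x by positivity) hsmall
  have h5 : δ ^ 2 * P x * (α - β + 2 * L + δ * L + δ⁻¹ * L)
      = δ ^ 2 * P x * (α - β + 2 * L + δ * L) + L * (δ * P x) := by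
    field_simp
  rw [h5] at h4
  show Q' x < δ ^ 2 * P' x
  linarith
end

section
/- Let β ∈ ℝ, L ≥ 0, δ > 0, let z : [0,t₀] → ℝ be continuous, and set k = β − L − δ^{−1}L. Let P, Q : [0,t₀] → ℝ be differentiable and nonnegative with Q(t) ≥ δ²·P(t) for all t ∈ [0,t₀], and suppose (1/2)Q'(t) ≤ (−β + z(t) + L)·Q(t) + L·√(P(t)Q(t)) for all t ∈ [0,t₀]. Then for every t ∈ [0,t₀]: Q(t) ≤ Q(0)·e^{−2kt + 2∫_0^t z(s)ds} and P(t) ≤ δ^{−2}·Q(0)·e^{−2kt + 2∫_0^t z(s)ds}. -/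
/-- Exponential decay estimate for trajectories outside the cone, used in the proof
of almost sure asymptotic completeness. -/
theorem stmt_5 (β L δ t₀ : ℝ) (hL : 0 ≤ L) (hδ : 0 < δ) (ht₀ : 0 ≤ t₀)
    (z : ℝ → ℝ) (hz : ContinuousOn z (Set.Icc 0 t₀))
    (k : ℝ) (hk : k = β - L - δ⁻¹ * L)
    (P Q P' Q' : ℝ → ℝ)
    (hP : ∀ t ∈ Set.Icc 0 t₀, HasDerivAt P (P' t) t)
    (hQ : ∀ t ∈ Set.Icc 0 t₀, HasDerivAt Q (Q' t) t)
    (hPnn : ∀ t ∈ Set.Icc 0 t₀, 0 ≤ P t)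
    (hQnn : ∀ t ∈ Set.Icc 0 t₀, 0 ≤ Q t)
    (hcone : ∀ t ∈ Set.Icc 0 t₀, δ ^ 2 * P t ≤ Q t)
    (hQ' : ∀ t ∈ Set.Icc 0 t₀,
      (1 / 2) * Q' t ≤ (-β + z t + L) * Q t + L * Real.sqrt (P t * Q t)) :
    ∀ t ∈ Set.Icc 0 t₀,
      Q t ≤ Q 0 * Real.exp (-2 * k * t + 2 * ∫ s in (0:ℝ)..t, z s) ∧
      P t ≤ δ⁻¹ ^ 2 * Q 0 * Real.exp (-2 * k * t + 2 * ∫ s in (0:ℝ)..t, z s) := by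
  have hkey : ∀ t ∈ Set.Icc 0 t₀, Q' t ≤ 2 * (-k + z t) * Q t := by
    intro t ht
    have h1 := hQ' t ht
    have hs : Real.sqrt (P t * Q t) ≤ δ⁻¹ * Q t := by
      apply Real.sqrt_le_iff.mpr
      refine ⟨mul_nonneg (inv_nonneg.mpr hδ.le) (hQnn t ht), ?_⟩
      have hp : P t ≤ δ⁻¹ ^ 2 * Q t := by
        rw [inv_pow, inv_mul_eq_div, le_div_iff₀ (by positivity)]
        linarith [hcone t ht]
      calc P t * Q t ≤ (δ⁻¹ ^ 2 * Q t) * Q t := mul_le_mul_of_nonneg_right hp (hQnn t ht)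
        _ = (δ⁻¹ * Q t) ^ 2 := by ring
    have h2 := mul_le_mul_of_nonneg_left hs hL
    subst hk
    nlinarith
  obtain ⟨w, hw, hwz⟩ : ∃ w : ℝ → ℝ, Continuous w ∧ ∀ t ∈ Set.Icc 0 t₀, w t = z t := by
    refine ⟨Set.IccExtend ht₀ ((Set.Icc 0 t₀).restrict z), ?_, ?_⟩
    · exact (continuousOn_iff_continuous_restrict.mp hz).Icc_extend'
    · intro t ht
      rw [Set.IccExtend_of_mem _ _ ht]
      rfl
  have hint : ∀ t ∈ Set.Icc 0 t₀, ∫ s in (0:ℝ)..t, z s = ∫ s in (0:ℝ)..t, w s := by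
    intro t ht
    apply intervalIntegral.integral_congr
    intro s hs
    rw [Set.uIcc_of_le ht.1] at hs
    exact (hwz s ⟨hs.1, hs.2.trans ht.2⟩).symm
  have hE : ∀ t, HasDerivAt (fun t => Real.exp (2 * k * t - 2 * ∫ s in (0:ℝ)..t, w s))
      (Real.exp (2 * k * t - 2 * ∫ s in (0:ℝ)..t, w s) * (2 * k * 1 - 2 * w t)) t := by
    intro t
    exact (((hasDerivAt_id t).const_mul (2 * k)).sub
      ((hw.integral_hasStrictDerivAt 0 t).hasDerivAt.const_mul 2)).exp
  have hG := fun t ht => (hQ t ht).mul (hE t)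
  have hanti := antitoneOn_of_deriv_nonpos (convex_Icc 0 t₀)
    (fun t ht => (hG t ht).continuousAt.continuousWithinAt)
    (fun t ht => (hG t (interior_subset ht)).differentiableAt.differentiableWithinAt)
    (by
      intro t ht
      have ht' := interior_subset ht
      rw [(hG t ht').deriv]
      have h1 := hkey t ht'
      rw [← hwz t ht'] at h1
      have h2 := mul_le_mul_of_nonneg_right h1
        (Real.exp_pos (2 * k * t - 2 * ∫ s in (0:ℝ)..t, w s)).le
      nlinarith)
  intro t ht
  have hQt : Q t ≤ Q 0 * Real.exp (-2 * k * t + 2 * ∫ s in (0:ℝ)..t, z s) := by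
    have h := hanti (Set.left_mem_Icc.mpr ht₀) ht ht.1
    simp only [Pi.mul_apply, intervalIntegral.integral_same, mul_zero, sub_zero, Real.exp_zero,
      mul_one] at h
    rw [hint t ht]
    have h3 := mul_le_mul_of_nonneg_right h
      (Real.exp_pos (-2 * k * t + 2 * ∫ s in (0:ℝ)..t, w s)).le
    rw [mul_assoc, ← Real.exp_add] at h3
    ring_nf at h3 ⊢
    simpa using h3
  refine ⟨hQt, ?_⟩
  have hp : P t ≤ δ⁻¹ ^ 2 * Q t := by
    rw [inv_pow, inv_mul_eq_div, le_div_iff₀ (by positivity)]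
    linarith [hcone t ht]
  rw [mul_assoc]
  exact hp.trans (mul_le_mul_of_nonneg_left hQt (by positivity))
end

section
/- Let ω : ℝ → ℝ be continuous and such that s ↦ e^s·ω(s) is Lebesgue integrable on (−∞, 0]. Then for every t ∈ ℝ the integral ∫_{−∞}^t e^{s−t}·ω(s) ds converges, the function z_ω(t) := ω(t) − ∫_{−∞}^t e^{s−t}·ω(s) ds is continuous, and for every t ∈ ℝ one has z_ω(t) + ∫_0^t z_ω(s) ds = z_ω(0) + ω(t) − ω(0). (Pathwise, z_ω is the stationary solution of the Langevin equation dz + z dt = dω.) -/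
open MeasureTheory

/-- Pathwise, `z_ω` is the stationary solution of the Langevin equation
`dz + z dt = dω`. -/
theorem stmt_6 (ω : ℝ → ℝ) (hω : Continuous ω)
    (hint : IntegrableOn (fun s => Real.exp s * ω s) (Set.Iic 0))
    (zω : ℝ → ℝ)
    (hzω : ∀ t, zω t = ω t - ∫ s in Set.Iic t, Real.exp (s - t) * ω s) :
    (∀ t : ℝ, IntegrableOn (fun s => Real.exp (s - t) * ω s) (Set.Iic t)) ∧
    Continuous zω ∧
    ∀ t : ℝ, zω t + (∫ s in (0:ℝ)..t, zω s) = zω 0 + ω t - ω 0 := by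
  have hc : Continuous (fun s => Real.exp s * ω s) := Real.continuous_exp.mul hω
  have hI : ∀ t : ℝ, IntegrableOn (fun s => Real.exp s * ω s) (Set.Iic t) := by
    intro t
    have h2 : IntegrableOn (fun s => Real.exp s * ω s) (Set.Icc 0 t) :=
      hc.continuousOn.integrableOn_Icc
    refine (hint.union h2).mono_set ?_
    intro x hx
    rcases le_total x 0 with h | h
    · exact Or.inl h
    · exact Or.inr ⟨h, hx⟩
  have heq : ∀ t : ℝ, (fun s => Real.exp (s - t) * ω s)
      = fun s => Real.exp (-t) * (Real.exp s * ω s) := by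
    intro t
    funext s
    rw [sub_eq_add_neg, Real.exp_add]
    ring
  set C := ∫ s in Set.Iic (0:ℝ), Real.exp s * ω s with hC
  have hz : ∀ t, zω t = ω t - Real.exp (-t) * (C + ∫ s in (0:ℝ)..t, Real.exp s * ω s) := by
    intro t
    rw [hzω t, heq t, integral_const_mul,
      ← intervalIntegral.integral_Iic_sub_Iic (hI 0) (hI t)]
    ring
  have hd : ∀ t : ℝ, HasDerivAt
      (fun t => Real.exp (-t) * (C + ∫ s in (0:ℝ)..t, Real.exp s * ω s)) (zω t) t := by
    intro t
    have h1 : HasDerivAt (fun t => ∫ s in (0:ℝ)..t, Real.exp s * ω s) (Real.exp t * ω t) t :=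
      hc.integral_hasStrictDerivAt 0 t |>.hasDerivAt
    have h2 : HasDerivAt (fun t : ℝ => Real.exp (-t)) (Real.exp (-t) * (-1)) t :=
      (hasDerivAt_neg t).exp
    refine (h2.mul (h1.const_add C)).congr_deriv ?_
    rw [hz t]
    have : Real.exp (-t) * Real.exp t = 1 := by rw [← Real.exp_add]; simp
    linear_combination (ω t) * this
  have hzc : Continuous zω := by
    rw [funext hz]
    exact hω.sub (continuous_iff_continuousAt.2 fun t => (hd t).continuousAt)
  refine ⟨fun t => ?_, hzc, fun t => ?_⟩
  · rw [heq t]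
    exact (hI t).const_mul _
  · rw [intervalIntegral.integral_eq_sub_of_hasDerivAt (fun x _ => hd x)
      (hzc.intervalIntegrable _ _), hz t, hz 0]
    ring
end

section
/- Let ω : ℝ → ℝ be continuous with ω(t)/t → 0 as t → +∞ and as t → −∞ (in particular s ↦ e^s·ω(s) is integrable on (−∞, 0]), and define z_ω(t) = ω(t) − ∫_{−∞}^t e^{s−t}·ω(s) ds. Then z_ω(t)/t → 0 as t → +∞ and as t → −∞. -/
open MeasureTheory Filter

lemma aux_bound (ω : ℝ → ℝ) (hω : Continuous ω)
    (h1 : Tendsto (fun t => ω t / t) atTop (nhds 0))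
    (h2 : Tendsto (fun t => ω t / t) atBot (nhds 0)) :
    ∃ M : ℝ, 0 ≤ M ∧ ∀ s, |ω s| ≤ M + |s| := by
  have e1 := h1.eventually (Metric.ball_mem_nhds 0 one_pos)
  have e2 := h2.eventually (Metric.ball_mem_nhds 0 one_pos)
  obtain ⟨A, hA⟩ := eventually_atTop.1 (e1.and (eventually_gt_atTop 0))
  obtain ⟨B, hB⟩ := eventually_atBot.1 (e2.and (eventually_lt_atBot 0))
  obtain ⟨M, hM⟩ := (isCompact_Icc (a := B) (b := A)).exists_bound_of_continuousOn hω.continuousOn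
  have key : ∀ s : ℝ, s ≠ 0 → ω s / s ∈ Metric.ball (0:ℝ) 1 → |ω s| ≤ |s| := by
    intro s hs h
    rw [mem_ball_zero_iff, Real.norm_eq_abs, abs_div, div_lt_one (abs_pos.2 hs)] at h
    exact h.le
  refine ⟨|M|, abs_nonneg _, fun s => ?_⟩
  have hm := abs_nonneg M
  by_cases ha : A ≤ s
  · linarith [key s (hA s ha).2.ne' (hA s ha).1]
  by_cases hb : s ≤ B
  · linarith [key s (hB s hb).2.ne (hB s hb).1]
  have := hM s ⟨by linarith, by linarith⟩
  rw [Real.norm_eq_abs] at this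
  linarith [le_abs_self M, abs_nonneg s]

lemma aux_lim (ω : ℝ → ℝ) (hω : Continuous ω) (l : Filter ℝ) [l.IsCountablyGenerated]
    (hl : Tendsto (fun t : ℝ => |t|) l atTop)
    (hs : ∀ u : ℝ, Tendsto (fun t => u + t) l l)
    (h : Tendsto (fun t => ω t / t) l (nhds 0))
    (M : ℝ) (hM : ∀ s, |ω s| ≤ M + |s|)
    (zω : ℝ → ℝ)
    (hzω : ∀ t, zω t = ω t - ∫ s in Set.Iic t, Real.exp (s - t) * ω s) :
    Tendsto (fun t => zω t / t) l (nhds 0) := by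
  have hz : ∀ t, zω t / t = ω t / t - ∫ u in Set.Iic (0:ℝ), Real.exp u * (ω (u + t) / t) := by
    intro t
    have := (measurePreserving_add_right volume t).setIntegral_preimage_emb
      (measurableEmbedding_addRight t) (fun s => Real.exp (s - t) * ω s) (Set.Iic t)
    have hp : (fun x : ℝ => x + t) ⁻¹' Set.Iic t = Set.Iic 0 := by
      ext x; simp
    rw [hp] at this
    simp only [add_sub_cancel_right] at this
    rw [hzω, ← this, sub_div, ← integral_div]
    simp only [mul_div_assoc]
  simp only [hz]
  have hne : ∀ᶠ t in l, 1 ≤ |t| := hl.eventually_ge_atTop 1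
  have hlim : Tendsto (fun t => ∫ u in Set.Iic (0:ℝ), Real.exp u * (ω (u + t) / t)) l
      (nhds (∫ u in Set.Iic (0:ℝ), (0:ℝ))) := by
    apply tendsto_integral_filter_of_dominated_convergence
      (fun u => (M + 1) * Real.exp (1 * u) + 2 * Real.exp ((1/2) * u))
    · refine Eventually.of_forall fun t => ?_
      exact Continuous.aestronglyMeasurable (by fun_prop)
    · filter_upwards [hne] with t ht
      filter_upwards [ae_restrict_mem measurableSet_Iic] with u hu
      have hu : u ≤ 0 := hu
      have b1 : |ω (u + t) / t| ≤ M + 1 + |u| := by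
        have hM0 : 0 ≤ M := by simpa using (abs_nonneg _).trans (hM 0)
        rw [abs_div, div_le_iff₀ (by linarith)]
        nlinarith [hM (u + t), abs_add_le u t, abs_nonneg u]
      have b2 : |u| ≤ 2 * Real.exp (-(1/2) * u) := by
        rw [abs_of_nonpos hu]
        linarith [Real.add_one_le_exp (-(1/2) * u)]
      have b3 : Real.exp u * Real.exp (-(1/2) * u) = Real.exp ((1/2) * u) := by
        rw [← Real.exp_add]; ring_nf
      rw [norm_mul, Real.norm_eq_abs, Real.norm_eq_abs, Real.abs_exp, one_mul, ← b3]
      nlinarith [Real.exp_pos u]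
    · exact ((integrableOn_exp_mul_Iic one_pos 0).const_mul _).add
        ((integrableOn_exp_mul_Iic (by norm_num) 0).const_mul _)
    · refine Eventually.of_forall fun u => ?_
      have a1 : Tendsto (fun t => ω (u + t) / (u + t)) l (nhds 0) := h.comp (hs u)
      have a2 : Tendsto (fun t : ℝ => u / t) l (nhds 0) := by
        rw [tendsto_zero_iff_norm_tendsto_zero]
        simpa [abs_div] using hl.const_div_atTop |u|
      have a3 := (a1.mul (a2.add_const 1)).const_mul (Real.exp u)
      simp only [zero_mul, mul_zero] at a3
      refine a3.congr' ?_
      filter_upwards [hne, (hl.comp (hs u)).eventually_ge_atTop 1] with t ht ht'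
      have n1 : t ≠ 0 := by rintro rfl; norm_num at ht
      have n2 : u + t ≠ 0 := by
        intro h0; simp [h0] at ht'; norm_num at ht'
      field_simp
  simpa using h.sub hlim

/-- Sublinear growth of the path `ω` implies sublinear growth of the stationary
Ornstein–Uhlenbeck process `z_ω` driven by `ω`. -/
theorem stmt_7 (ω : ℝ → ℝ) (hω : Continuous ω)
    (hsub_top : Tendsto (fun t => ω t / t) atTop (nhds 0))
    (hsub_bot : Tendsto (fun t => ω t / t) atBot (nhds 0))
    (hint : IntegrableOn (fun s => Real.exp s * ω s) (Set.Iic 0))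
    (zω : ℝ → ℝ)
    (hzω : ∀ t, zω t = ω t - ∫ s in Set.Iic t, Real.exp (s - t) * ω s) :
    Tendsto (fun t => zω t / t) atTop (nhds 0) ∧
    Tendsto (fun t => zω t / t) atBot (nhds 0) := by
  obtain ⟨M, -, hM⟩ := aux_bound ω hω hsub_top hsub_bot
  exact ⟨aux_lim ω hω atTop tendsto_abs_atTop_atTop
      (fun u => tendsto_atTop_add_const_left _ u tendsto_id) hsub_top M hM zω hzω,
    aux_lim ω hω atBot tendsto_abs_atBot_atTop
      (fun u => tendsto_atBot_add_const_left _ u tendsto_id) hsub_bot M hM zω hzω⟩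
end

section
/- Let a > 0 and let f : ℝ → ℝ be Lipschitz with constant L_f. Define F : ℝ² → ℝ² by F(x,y) = (0, f(x)). Then F is Lipschitz with constant 2L_f/a with respect to the norm ‖(x,y)‖_a = (2·[(a²/4)·x² + ((a/2)x + y)²])^{1/2}, i.e. ‖F(p) − F(q)‖_a ≤ (2L_f/a)·‖p − q‖_a for all p, q ∈ ℝ². -/
/-- In the adapted norm, the nonlinearity `(x, y) ↦ (0, f(x))` of the damped wave
equation has Lipschitz constant `2 L_f / a`. -/
theorem stmt_11 (a Lf : ℝ) (ha : 0 < a) (f : ℝ → ℝ)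
    (hf : ∀ x y : ℝ, |f x - f y| ≤ Lf * |x - y|)
    (na : (ℝ × ℝ) → ℝ)
    (hna : ∀ p : ℝ × ℝ,
      na p = Real.sqrt (2 * ((a ^ 2 / 4) * p.1 ^ 2 + ((a / 2) * p.1 + p.2) ^ 2)))
    (F : (ℝ × ℝ) → (ℝ × ℝ)) (hF : ∀ p : ℝ × ℝ, F p = (0, f p.1)) :
    ∀ p q : ℝ × ℝ, na (F p - F q) ≤ (2 * Lf / a) * na (p - q) := by
  have hL : 0 ≤ Lf := by
    have h := hf 1 0
    have h2 := abs_nonneg (f 1 - f 0)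
    norm_num at h
    linarith
  intro p q
  rw [hna, hna, hF, hF]
  apply Real.sqrt_le_iff.mpr
  refine ⟨by positivity, ?_⟩
  rw [mul_pow, Real.sq_sqrt (by positivity)]
  have h := hf p.1 q.1
  have h3 : (f p.1 - f q.1) ^ 2 ≤ Lf ^ 2 * (p.1 - q.1) ^ 2 := by
    have h4 := pow_le_pow_left₀ (abs_nonneg _) h 2
    rwa [mul_pow, sq_abs, sq_abs] at h4
  simp only [Prod.fst_sub, Prod.snd_sub]
  have h5 : (2 * Lf / a) ^ 2 * (2 * ((a ^ 2 / 4) * (p.1 - q.1) ^ 2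
      + ((a / 2) * (p.1 - q.1) + (p.2 - q.2)) ^ 2))
      = 2 * (Lf ^ 2 * (p.1 - q.1) ^ 2)
        + 2 * ((2 * Lf / a) * ((a / 2) * (p.1 - q.1) + (p.2 - q.2))) ^ 2 := by
    field_simp
    ring
  rw [h5]
  have h6 := sq_nonneg ((2 * Lf / a) * ((a / 2) * (p.1 - q.1) + (p.2 - q.2)))
  have h7 : 2 * (a ^ 2 / 4 * ((0:ℝ) - 0) ^ 2 + (a / 2 * ((0:ℝ) - 0) + (f p.1 - f q.1)) ^ 2)
      = 2 * (f p.1 - f q.1) ^ 2 := by ring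
  rw [h7]
  linarith
end

section
/- In the Lyapunov–Perron setting, let additionally h : H_c → H_s be Lipschitz with constant L_h ≥ 0, and assume L·(1/(η+β) − 1/(α+η)) + L_h < 1. Then for every T_f > 0 and every ξ ∈ H_c there exists a unique continuous function v = (v_c, v_s) : [0, T_f] → H_c × H_s satisfying, for all t ∈ [0, T_f]: v_c(t) = S_c(t − T_f)·e^{∫_{T_f}^t z(s)ds}·ξ + ∫_{T_f}^t S_c(t−τ)·e^{∫_τ^t z(s)ds}·g_c(τ, v(τ)) dτ and v_s(t) = S_s(t)·e^{∫_0^t z(s)ds}·h(v_c(0)) + ∫_0^t S_s(t−τ)·e^{∫_τ^t z(s)ds}·g_s(τ, v(τ)) dτ. (This is the backward solvability, on any finite time interval, of the system restricted to the Lipschitz manifold given as the graph of h, with the center component prescribed at the final time T_f.) -/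
open MeasureTheory Set

noncomputable def wgt (z : ℝ → ℝ) (η t : ℝ) : ℝ := Real.exp (-η * t - ∫ s in (0:ℝ)..t, z s)

noncomputable def duh {E : Type*} [NormedAddCommGroup E] [NormedSpace ℝ E] (z : ℝ → ℝ)
    (S : ℝ → E →L[ℝ] E) (t0 t : ℝ) (x : E) (g : ℝ → E) : E :=
  Real.exp (∫ s in t0..t, z s) • S (t - t0) x +
    ∫ τ in t0..t, Real.exp (∫ s in τ..t, z s) • S (t - τ) (g τ)

theorem zint_cont {z : ℝ → ℝ} (hz : Continuous z) :
    Continuous fun p : ℝ × ℝ => ∫ s in p.2..p.1, z s := by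
  have h1 : Continuous fun t : ℝ => ∫ s in (0:ℝ)..t, z s :=
    intervalIntegral.continuous_primitive (fun a b => hz.intervalIntegrable a b) 0
  have : (fun p : ℝ × ℝ => ∫ s in p.2..p.1, z s) =
      fun p => (∫ s in (0:ℝ)..p.1, z s) - ∫ s in (0:ℝ)..p.2, z s := by
    funext p
    rw [intervalIntegral.integral_interval_sub_left (hz.intervalIntegrable _ _)
      (hz.intervalIntegrable _ _)]
  rw [this]
  exact (h1.comp continuous_fst).sub (h1.comp continuous_snd)

theorem wgt_cont {z : ℝ → ℝ} (hz : Continuous z) (η : ℝ) : Continuous (wgt z η) := by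
  have h1 : Continuous fun t : ℝ => ∫ s in (0:ℝ)..t, z s :=
    intervalIntegral.continuous_primitive (fun a b => hz.intervalIntegrable a b) 0
  unfold wgt
  fun_prop

theorem wgt_pos (z : ℝ → ℝ) (η t : ℝ) : 0 < wgt z η t := Real.exp_pos _

theorem wgt_mul {z : ℝ → ℝ} (hz : Continuous z) (η τ t : ℝ) :
    wgt z η t * Real.exp (∫ s in τ..t, z s) = Real.exp (-η * (t - τ)) * wgt z η τ := by
  unfold wgt
  rw [← Real.exp_add, ← Real.exp_add]
  congr 1
  rw [← intervalIntegral.integral_interval_sub_left (hz.intervalIntegrable 0 t)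
      (hz.intervalIntegrable 0 τ)]
  ring

section
variable {E : Type*} [NormedAddCommGroup E] [NormedSpace ℝ E]

theorem integrand_cont {z : ℝ → ℝ} (hz : Continuous z) {S : ℝ → E →L[ℝ] E}
    (hS : Continuous fun p : ℝ × E => S p.1 p.2) {g : ℝ → E} (hg : Continuous g) :
    Continuous fun p : ℝ × ℝ => Real.exp (∫ s in p.2..p.1, z s) • S (p.1 - p.2) (g p.2) := by
  have h1 := zint_cont hz
  have h2 : Continuous fun p : ℝ × ℝ => S (p.1 - p.2) (g p.2) :=
    hS.comp (f := fun p : ℝ × ℝ => (p.1 - p.2, g p.2)) (by fun_prop)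
  exact (Real.continuous_exp.comp h1).smul h2

theorem duh_cont {z : ℝ → ℝ} (hz : Continuous z) {S : ℝ → E →L[ℝ] E}
    (hS : Continuous fun p : ℝ × E => S p.1 p.2) {g : ℝ → E} (hg : Continuous g) (t0 : ℝ) (x : E) :
    Continuous fun t => duh z S t0 t x g := by
  unfold duh
  refine Continuous.add ?_ ?_
  · exact (integrand_cont hz hS (g := fun _ => x) continuous_const).comp
      (f := fun t : ℝ => (t, t0)) (by fun_prop)
  · exact intervalIntegral.continuous_parametric_intervalIntegral_of_continuous
      (f := fun t τ => Real.exp (∫ s in τ..t, z s) • S (t - τ) (g τ))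
      (integrand_cont hz hS hg) continuous_id

theorem duh_sub {z : ℝ → ℝ} (hz : Continuous z) {S : ℝ → E →L[ℝ] E}
    (hS : Continuous fun p : ℝ × E => S p.1 p.2) {g₁ g₂ : ℝ → E} (hg₁ : Continuous g₁)
    (hg₂ : Continuous g₂) (t0 t : ℝ) (x₁ x₂ : E) :
    duh z S t0 t x₁ g₁ - duh z S t0 t x₂ g₂ =
      Real.exp (∫ s in t0..t, z s) • S (t - t0) (x₁ - x₂) +
      ∫ τ in t0..t, Real.exp (∫ s in τ..t, z s) • S (t - τ) (g₁ τ - g₂ τ) := by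
  unfold duh
  have i1 : ∀ {g : ℝ → E}, Continuous g → IntervalIntegrable
      (fun τ => Real.exp (∫ s in τ..t, z s) • S (t - τ) (g τ)) volume t0 t := fun hg =>
    ((integrand_cont hz hS hg).comp (f := fun τ : ℝ => (t, τ)) (by fun_prop)).intervalIntegrable _ _
  have : (fun τ => Real.exp (∫ s in τ..t, z s) • S (t - τ) (g₁ τ - g₂ τ)) =
    fun τ => Real.exp (∫ s in τ..t, z s) • S (t - τ) (g₁ τ) -
      Real.exp (∫ s in τ..t, z s) • S (t - τ) (g₂ τ) := by
    funext τ; rw [map_sub, smul_sub]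
  rw [this, intervalIntegral.integral_sub (i1 hg₁) (i1 hg₂), map_sub, smul_sub]
  abel

theorem pt_bound {z : ℝ → ℝ} (hz : Continuous z) {S : E →L[ℝ] E} {γ η M τ t : ℝ}
    (hS : ∀ x, ‖S x‖ ≤ Real.exp (-γ * (t - τ)) * ‖x‖) {y : E} (hy : wgt z η τ * ‖y‖ ≤ M) :
    ‖Real.exp (∫ s in τ..t, z s) • S y‖ ≤
      (wgt z η t)⁻¹ * M * Real.exp ((γ + η) * (τ - t)) := by
  have hw := wgt_pos z η t
  rw [norm_smul, Real.norm_of_nonneg (Real.exp_pos _).le]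
  have e : Real.exp (∫ s in τ..t, z s) = (wgt z η t)⁻¹ * (Real.exp (-η * (t - τ)) * wgt z η τ) := by
    rw [← wgt_mul hz η τ t]; field_simp
  have e2 : Real.exp ((γ + η) * (τ - t)) = Real.exp (-η * (t - τ)) * Real.exp (-γ * (t - τ)) := by
    rw [← Real.exp_add]; congr 1; ring
  rw [e, e2]
  calc _ ≤ (wgt z η t)⁻¹ * (Real.exp (-η * (t - τ)) * wgt z η τ) *
        (Real.exp (-γ * (t - τ)) * ‖y‖) := by
        have := wgt_pos z η τ
        gcongr; exact hS y
    _ = (wgt z η t)⁻¹ * (wgt z η τ * ‖y‖) * (Real.exp (-η * (t - τ)) * Real.exp (-γ * (t - τ))) := by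
        ring
    _ ≤ _ := by gcongr

theorem exp_int (c a b t : ℝ) (hc : c ≠ 0) :
    ∫ τ in a..b, Real.exp (c * (τ - t)) =
      Real.exp (c * (b - t)) / c - Real.exp (c * (a - t)) / c := by
  refine intervalIntegral.integral_eq_sub_of_hasDerivAt
    (f := fun τ => Real.exp (c * (τ - t)) / c) (fun τ _ => ?_)
    (Continuous.intervalIntegrable (by fun_prop) _ _)
  have := ((((hasDerivAt_id τ).sub_const t).const_mul c).exp).div_const c
  refine HasDerivAt.congr_deriv this ?_
  simp only [id, mul_one]
  exact mul_div_cancel_right₀ _ hc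

theorem duh_back {z : ℝ → ℝ} (hz : Continuous z) {S : ℝ → E →L[ℝ] E}
    (hS : Continuous fun p : ℝ × E => S p.1 p.2) {α η Tf M : ℝ}
    (hb : ∀ t : ℝ, t ≤ 0 → ∀ x : E, ‖S t x‖ ≤ Real.exp (-α * t) * ‖x‖) (hη : α + η < 0)
    {g₁ g₂ : ℝ → E} (hg₁ : Continuous g₁) (hg₂ : Continuous g₂) (hM : 0 ≤ M)
    (hg : ∀ τ ∈ Icc 0 Tf, wgt z η τ * ‖g₁ τ - g₂ τ‖ ≤ M) (x : E) {t : ℝ} (ht : t ∈ Icc 0 Tf) :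
    wgt z η t * ‖duh z S Tf t x g₁ - duh z S Tf t x g₂‖ ≤ M * (- (1 / (α + η))) := by
  have hw := wgt_pos z η t
  rw [duh_sub hz hS hg₁ hg₂, sub_self, map_zero, smul_zero, zero_add,
    intervalIntegral.integral_symm, norm_neg]
  have h1 : ‖∫ τ in t..Tf, Real.exp (∫ s in τ..t, z s) • S (t - τ) (g₁ τ - g₂ τ)‖ ≤
      ∫ τ in t..Tf, (wgt z η t)⁻¹ * M * Real.exp ((α + η) * (τ - t)) := by
    refine intervalIntegral.norm_integral_le_of_norm_le ht.2 ?_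
      (Continuous.intervalIntegrable (by fun_prop) _ _)
    refine Filter.Eventually.of_forall fun τ hτ => ?_
    exact pt_bound hz (hb _ (by linarith [hτ.1])) (hg τ ⟨ht.1.trans hτ.1.le, hτ.2⟩)
  rw [intervalIntegral.integral_const_mul, exp_int _ _ _ _ hη.ne] at h1
  calc _ ≤ wgt z η t * _ := mul_le_mul_of_nonneg_left h1 hw.le
    _ = M * (Real.exp ((α + η) * (Tf - t)) / (α + η) - 1 / (α + η)) := by
      simp only [sub_self, mul_zero, Real.exp_zero]; field_simp
    _ ≤ _ := by
      gcongr
      have : Real.exp ((α + η) * (Tf - t)) / (α + η) ≤ 0 :=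
        div_nonpos_of_nonneg_of_nonpos (Real.exp_pos _).le hη.le
      linarith

theorem duh_fwd {z : ℝ → ℝ} (hz : Continuous z) {S : ℝ → E →L[ℝ] E}
    (hS : Continuous fun p : ℝ × E => S p.1 p.2) {β η Tf M : ℝ}
    (hb : ∀ t : ℝ, 0 ≤ t → ∀ x : E, ‖S t x‖ ≤ Real.exp (-β * t) * ‖x‖) (hη : 0 < η + β)
    {g₁ g₂ : ℝ → E} (hg₁ : Continuous g₁) (hg₂ : Continuous g₂) (hM : 0 ≤ M)
    (hg : ∀ τ ∈ Icc 0 Tf, wgt z η τ * ‖g₁ τ - g₂ τ‖ ≤ M) (x₁ x₂ : E) {t : ℝ} (ht : t ∈ Icc 0 Tf) :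
    wgt z η t * ‖duh z S 0 t x₁ g₁ - duh z S 0 t x₂ g₂‖ ≤ ‖x₁ - x₂‖ + M * (1 / (η + β)) := by
  have hw := wgt_pos z η t
  rw [add_comm] at hη
  rw [duh_sub hz hS hg₁ hg₂]
  have h0 : ‖Real.exp (∫ s in (0:ℝ)..t, z s) • S (t - 0) (x₁ - x₂)‖ ≤
      (wgt z η t)⁻¹ * ‖x₁ - x₂‖ := by
    have := pt_bound hz (S := S (t - 0)) (γ := β) (η := η) (M := ‖x₁ - x₂‖) (τ := 0) (t := t)
      (hb _ (by linarith [ht.1])) (y := x₁ - x₂) (by simp [wgt])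
    refine this.trans ?_
    have h2 : Real.exp ((β + η) * (0 - t)) ≤ 1 := by
      rw [Real.exp_le_one_iff]; nlinarith [ht.1]
    exact mul_le_of_le_one_right (by positivity) h2
  have h1 : ‖∫ τ in (0:ℝ)..t, Real.exp (∫ s in τ..t, z s) • S (t - τ) (g₁ τ - g₂ τ)‖ ≤
      ∫ τ in (0:ℝ)..t, (wgt z η t)⁻¹ * M * Real.exp ((β + η) * (τ - t)) := by
    refine intervalIntegral.norm_integral_le_of_norm_le ht.1 ?_
      (Continuous.intervalIntegrable (by fun_prop) _ _)
    refine Filter.Eventually.of_forall fun τ hτ => ?_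
    exact pt_bound hz (hb _ (by linarith [hτ.2])) (hg τ ⟨hτ.1.le, hτ.2.trans ht.2⟩)
  rw [intervalIntegral.integral_const_mul, exp_int _ _ _ _ hη.ne'] at h1
  calc _ ≤ wgt z η t * _ := mul_le_mul_of_nonneg_left (norm_add_le_of_le h0 h1) hw.le
    _ = ‖x₁ - x₂‖ + M * (1 / (β + η) - Real.exp ((β + η) * (0 - t)) / (β + η)) := by
      simp only [sub_self, mul_zero, Real.exp_zero]; field_simp
    _ ≤ _ := by
      rw [add_comm η β]
      gcongr
      have : 0 ≤ Real.exp ((β + η) * (0 - t)) / (β + η) := by positivity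
      linarith

theorem strong_cont {S : ℝ → E →L[ℝ] E} (hS : ∀ x, Continuous fun t => S t x) {C : ℝ → ℝ}
    (hC : Continuous C) (hb : ∀ t x, ‖S t x‖ ≤ C t * ‖x‖) :
    Continuous fun p : ℝ × E => S p.1 p.2 := by
  rw [continuous_iff_continuousAt]
  rintro ⟨t0, x0⟩
  rw [ContinuousAt, tendsto_iff_norm_sub_tendsto_zero]
  have h1 : Continuous fun p : ℝ × E => C p.1 * ‖p.2 - x0‖ + ‖S p.1 x0 - S t0 x0‖ := by
    have := (hS x0).comp (continuous_fst (X := ℝ) (Y := E))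
    have h2 : Continuous fun p : ℝ × E => S p.1 x0 := this
    fun_prop
  have h2 := h1.tendsto (t0, x0)
  simp only [sub_self, norm_zero, mul_zero, add_zero] at h2
  refine squeeze_zero (fun _ => norm_nonneg _) (fun p => ?_) h2
  have : S p.1 p.2 - S t0 x0 = S p.1 (p.2 - x0) + (S p.1 x0 - S t0 x0) := by
    rw [map_sub]; abel
  rw [this]
  exact norm_add_le_of_le (hb _ _) le_rfl

theorem weighted_fp [CompleteSpace E] {X : Type*} [TopologicalSpace X] [CompactSpace X]
    (Φ : C(X, E) → C(X, E)) (w : X → ℝ) (hw : Continuous w) (hw0 : ∀ t, 0 < w t) (k : ℝ)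
    (hk0 : 0 ≤ k) (hk : k < 1)
    (hΦ : ∀ u v : C(X, E), ∀ d, 0 ≤ d → (∀ t, w t * ‖u t - v t‖ ≤ d) →
      ∀ t, w t * ‖Φ u t - Φ v t‖ ≤ k * d) :
    ∃ u, Φ u = u ∧ ∀ v, Φ v = v → u = v := by
  have hwi : Continuous fun t => (w t)⁻¹ := hw.inv₀ fun t => (hw0 t).ne'
  let m : C(X, E) → C(X, E) := fun u => ⟨fun t => w t • u t, by fun_prop⟩
  let n : C(X, E) → C(X, E) := fun u => ⟨fun t => (w t)⁻¹ • u t, by fun_prop⟩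
  have mn : ∀ u, m (n u) = u := fun u => by
    ext t; simp [m, n, smul_smul, (hw0 t).ne']
  have nm : ∀ u, n (m u) = u := fun u => by
    ext t; simp [m, n, smul_smul, (hw0 t).ne']
  let Ψ : C(X, E) → C(X, E) := fun u => m (Φ (n u))
  have hc : ContractingWith ⟨k, hk0⟩ Ψ := by
    refine ⟨by exact_mod_cast hk, LipschitzWith.of_dist_le_mul fun u v => ?_⟩
    rw [ContinuousMap.dist_le (by positivity)]
    intro t
    have := hΦ (n u) (n v) (dist u v) dist_nonneg (fun s => by
      have h1 := ContinuousMap.dist_apply_le_dist (f := u) (g := v) s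
      simp only [n, ContinuousMap.coe_mk, ← smul_sub, norm_smul, norm_inv,
        Real.norm_of_nonneg (hw0 s).le]
      rw [dist_eq_norm] at h1
      rwa [mul_inv_cancel_left₀ (hw0 s).ne']) t
    simp only [Ψ, m, ContinuousMap.coe_mk, dist_eq_norm, ← smul_sub, norm_smul,
        Real.norm_of_nonneg (hw0 t).le]
    rw [dist_eq_norm] at this
    exact this
  refine ⟨n (hc.fixedPoint Ψ), ?_, fun v hv => ?_⟩
  · have := hc.fixedPoint_isFixedPt
    calc _ = n (Ψ (hc.fixedPoint Ψ)) := (nm _).symm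
      _ = _ := by rw [this]
  · have : Function.IsFixedPt Ψ (m v) := by
      show m (Φ (n (m v))) = m v
      rw [nm, hv]
    rw [← hc.fixedPoint_unique this, nm]
end

theorem core_fp {Hc Hs : Type*}
    [NormedAddCommGroup Hc] [InnerProductSpace ℝ Hc] [CompleteSpace Hc]
    [NormedAddCommGroup Hs] [InnerProductSpace ℝ Hs] [CompleteSpace Hs]
    (α β η : ℝ) (hη1 : -β < η) (hη2 : η < -α)
    (Sc : ℝ → Hc →L[ℝ] Hc) (hSccont : Continuous fun p : ℝ × Hc => Sc p.1 p.2)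
    (hScbnd : ∀ t : ℝ, t ≤ 0 → ∀ x : Hc, ‖Sc t x‖ ≤ Real.exp (-α * t) * ‖x‖)
    (Ss : ℝ → Hs →L[ℝ] Hs) (hSscont : Continuous fun p : ℝ × Hs => Ss p.1 p.2)
    (hSsbnd : ∀ t : ℝ, 0 ≤ t → ∀ x : Hs, ‖Ss t x‖ ≤ Real.exp (-β * t) * ‖x‖)
    (z : ℝ → ℝ) (hz : Continuous z)
    (L : ℝ) (hL : 0 ≤ L)
    (gc : ℝ → WithLp 2 (Hc × Hs) → Hc)
    (gs : ℝ → WithLp 2 (Hc × Hs) → Hs)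
    (hgcCont : Continuous fun p : ℝ × WithLp 2 (Hc × Hs) => gc p.1 p.2)
    (hgsCont : Continuous fun p : ℝ × WithLp 2 (Hc × Hs) => gs p.1 p.2)
    (hgcLip : ∀ (t : ℝ) (x y : WithLp 2 (Hc × Hs)), ‖gc t x - gc t y‖ ≤ L * ‖x - y‖)
    (hgsLip : ∀ (t : ℝ) (x y : WithLp 2 (Hc × Hs)), ‖gs t x - gs t y‖ ≤ L * ‖x - y‖)
    (Lh : ℝ) (hLh : 0 ≤ Lh) (h : Hc → Hs)
    (hhLip : ∀ x y : Hc, ‖h x - h y‖ ≤ Lh * ‖x - y‖)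
    (hsmall : L * (1 / (η + β) - 1 / (α + η)) + Lh < 1)
    (Tf : ℝ) (hT : 0 ≤ Tf) (ξ : Hc) :
    ∃ u : C(Icc 0 Tf, WithLp 2 (Hc × Hs)),
      (∀ t : Icc 0 Tf, (u t).fst = duh z Sc Tf t ξ (fun τ => gc τ (IccExtend hT u τ)) ∧
        (u t).snd = duh z Ss 0 t (h (IccExtend hT u 0).fst) (fun τ => gs τ (IccExtend hT u τ))) ∧
      ∀ v : C(Icc 0 Tf, WithLp 2 (Hc × Hs)),
      (∀ t : Icc 0 Tf, (v t).fst = duh z Sc Tf t ξ (fun τ => gc τ (IccExtend hT v τ)) ∧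
        (v t).snd = duh z Ss 0 t (h (IccExtend hT v 0).fst) (fun τ => gs τ (IccExtend hT v τ))) →
      u = v := by
  have cV : ∀ u : C(Icc 0 Tf, WithLp 2 (Hc × Hs)), Continuous (IccExtend hT u) :=
    fun u => u.continuous.Icc_extend'
  have cc : ∀ u : C(Icc 0 Tf, WithLp 2 (Hc × Hs)),
      Continuous fun τ => gc τ (IccExtend hT u τ) := fun u =>
    hgcCont.comp (f := fun τ => (τ, IccExtend hT u τ)) (continuous_id.prodMk (cV u))
  have cs : ∀ u : C(Icc 0 Tf, WithLp 2 (Hc × Hs)),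
      Continuous fun τ => gs τ (IccExtend hT u τ) := fun u =>
    hgsCont.comp (f := fun τ => (τ, IccExtend hT u τ)) (continuous_id.prodMk (cV u))
  let Φ : C(Icc 0 Tf, WithLp 2 (Hc × Hs)) → C(Icc 0 Tf, WithLp 2 (Hc × Hs)) := fun u =>
    ⟨fun t => WithLp.toLp 2 (duh z Sc Tf t ξ (fun τ => gc τ (IccExtend hT u τ)),
      duh z Ss 0 t (h (IccExtend hT u 0).fst) (fun τ => gs τ (IccExtend hT u τ))), by
      have h1 := (duh_cont hz hSccont (cc u) Tf ξ).comp (continuous_subtype_val (p := (· ∈ Icc 0 Tf)))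
      have h2 := (duh_cont hz hSscont (cs u) 0 (h (IccExtend hT u 0).fst)).comp
        (continuous_subtype_val (p := (· ∈ Icc 0 Tf)))
      exact (WithLp.prod_continuous_toLp 2 Hc Hs).comp (h1.prodMk h2)⟩
  have hΦ : ∀ u, Φ u = u ↔ ∀ t : Icc 0 Tf,
      (u t).fst = duh z Sc Tf t ξ (fun τ => gc τ (IccExtend hT u τ)) ∧
      (u t).snd = duh z Ss 0 t (h (IccExtend hT u 0).fst) (fun τ => gs τ (IccExtend hT u τ)) := by
    intro u
    constructor
    · intro hu t
      have : Φ u t = u t := by rw [hu]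
      exact ⟨congrArg WithLp.fst this.symm, congrArg WithLp.snd this.symm⟩
    · intro hu
      ext t : 1
      apply (WithLp.equiv 2 (Hc × Hs)).injective
      exact Prod.ext (hu t).1.symm (hu t).2.symm
  have p1 : 0 < η + β := by linarith
  have p2 : α + η < 0 := by linarith
  have p3 : 0 ≤ 1 / (η + β) := by positivity
  have p4 : 0 ≤ - (1 / (α + η)) := by
    have : 1 / (α + η) ≤ 0 := div_nonpos_of_nonneg_of_nonpos zero_le_one p2.le
    linarith
  obtain ⟨u, hu, huq⟩ := weighted_fp Φ (fun t => wgt z η t)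
    ((wgt_cont hz η).comp continuous_subtype_val) (fun t => wgt_pos _ _ _)
    (L * (1 / (η + β) - 1 / (α + η)) + Lh) (by
      have := mul_nonneg hL (add_nonneg p3 p4); linarith) hsmall (by
    intro u v d hd huv t
    have hV : ∀ τ ∈ Icc 0 Tf, wgt z η τ * ‖IccExtend hT u τ - IccExtend hT v τ‖ ≤ d := by
      intro τ hτ
      rw [IccExtend_of_mem hT _ hτ, IccExtend_of_mem hT _ hτ]
      exact huv ⟨τ, hτ⟩
    have aux : ∀ τ ∈ Icc 0 Tf, ∀ r, r ≤ L * ‖IccExtend hT u τ - IccExtend hT v τ‖ →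
        wgt z η τ * r ≤ L * d := fun τ hτ r hr => by
      calc _ ≤ wgt z η τ * (L * ‖IccExtend hT u τ - IccExtend hT v τ‖) :=
            mul_le_mul_of_nonneg_left hr (wgt_pos _ _ _).le
        _ = L * (wgt z η τ * ‖IccExtend hT u τ - IccExtend hT v τ‖) := by ring
        _ ≤ _ := mul_le_mul_of_nonneg_left (hV τ hτ) hL
    have b1 := duh_back hz hSccont hScbnd p2 (cc u) (cc v) (mul_nonneg hL hd)
      (fun τ hτ => aux τ hτ _ (hgcLip τ _ _)) ξ t.2
    have b2 := duh_fwd hz hSscont hSsbnd p1 (cs u) (cs v) (mul_nonneg hL hd)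
      (fun τ hτ => aux τ hτ _ (hgsLip τ _ _)) (h (IccExtend hT u 0).fst)
      (h (IccExtend hT v 0).fst) t.2
    have fstle : ∀ x : WithLp 2 (Hc × Hs), ‖x.fst‖ ≤ ‖x‖ := fun x => by
      have := WithLp.prod_norm_sq_eq_of_L2 x
      exact abs_le_of_sq_le_sq' (by nlinarith [sq_nonneg ‖x.snd‖]) (norm_nonneg _) |>.2
    have nle : ∀ x : WithLp 2 (Hc × Hs), ‖x‖ ≤ ‖x.fst‖ + ‖x.snd‖ := fun x => by
      have := WithLp.prod_norm_sq_eq_of_L2 x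
      exact abs_le_of_sq_le_sq' (by nlinarith [mul_nonneg (norm_nonneg x.fst) (norm_nonneg x.snd)])
        (by positivity) |>.2
    have b3 : ‖h (IccExtend hT u 0).fst - h (IccExtend hT v 0).fst‖ ≤ Lh * d := by
      refine (hhLip _ _).trans (mul_le_mul_of_nonneg_left ?_ hLh)
      have := hV 0 ⟨le_rfl, hT⟩
      simp only [wgt, mul_zero, intervalIntegral.integral_same, sub_self, Real.exp_zero,
        one_mul] at this
      exact (fstle (IccExtend hT u 0 - IccExtend hT v 0)).trans this
    have b4 := mul_le_mul_of_nonneg_left (nle (Φ u t - Φ v t)) (wgt_pos z η t).le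
    refine b4.trans ?_
    rw [mul_add]
    refine (add_le_add b1 (b2.trans (add_le_add_left b3 _))).trans (le_of_eq ?_)
    ring)
  exact ⟨u, (hΦ u).1 hu, fun v hv => huq v ((hΦ v).2 hv)⟩

/-- Backward solvability, on any finite time interval `[0, T_f]`, of the system
restricted to the Lipschitz manifold given as the graph of `h`, with the center
component prescribed at the final time `T_f`. -/
theorem stmt_13
    {Hc Hs : Type*}
    [NormedAddCommGroup Hc] [InnerProductSpace ℝ Hc] [CompleteSpace Hc]
    [TopologicalSpace.SeparableSpace Hc]
    [NormedAddCommGroup Hs] [InnerProductSpace ℝ Hs] [CompleteSpace Hs]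
    [TopologicalSpace.SeparableSpace Hs]
    (α β η : ℝ) (hα : 0 ≤ α) (hαβ : α < β) (hη1 : -β < η) (hη2 : η < -α)
    (Sc : ℝ → Hc →L[ℝ] Hc)
    (hSc0 : Sc 0 = ContinuousLinearMap.id ℝ Hc)
    (hScgrp : ∀ s t : ℝ, Sc (s + t) = (Sc s).comp (Sc t))
    (hSccont : ∀ x : Hc, Continuous fun t => Sc t x)
    (hScbnd : ∀ t : ℝ, t ≤ 0 → ∀ x : Hc, ‖Sc t x‖ ≤ Real.exp (-α * t) * ‖x‖)
    (Ss : ℝ → Hs →L[ℝ] Hs)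
    (hSs0 : Ss 0 = ContinuousLinearMap.id ℝ Hs)
    (hSsgrp : ∀ s t : ℝ, 0 ≤ s → 0 ≤ t → Ss (s + t) = (Ss s).comp (Ss t))
    (hSscont : ∀ x : Hs, ContinuousOn (fun t => Ss t x) (Ici 0))
    (hSsbnd : ∀ t : ℝ, 0 ≤ t → ∀ x : Hs, ‖Ss t x‖ ≤ Real.exp (-β * t) * ‖x‖)
    (z : ℝ → ℝ) (hz : Continuous z)
    (L : ℝ) (hL : 0 ≤ L)
    (gc : ℝ → WithLp 2 (Hc × Hs) → Hc)
    (gs : ℝ → WithLp 2 (Hc × Hs) → Hs)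
    (hgcCont : Continuous fun p : ℝ × WithLp 2 (Hc × Hs) => gc p.1 p.2)
    (hgsCont : Continuous fun p : ℝ × WithLp 2 (Hc × Hs) => gs p.1 p.2)
    (hgc0 : ∀ t : ℝ, gc t 0 = 0) (hgs0 : ∀ t : ℝ, gs t 0 = 0)
    (hgcLip : ∀ (t : ℝ) (x y : WithLp 2 (Hc × Hs)), ‖gc t x - gc t y‖ ≤ L * ‖x - y‖)
    (hgsLip : ∀ (t : ℝ) (x y : WithLp 2 (Hc × Hs)), ‖gs t x - gs t y‖ ≤ L * ‖x - y‖)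
    -- the manifold map and its Lipschitz constant
    (Lh : ℝ) (hLh : 0 ≤ Lh) (h : Hc → Hs)
    (hhLip : ∀ x y : Hc, ‖h x - h y‖ ≤ Lh * ‖x - y‖)
    -- smallness condition
    (hsmall : L * (1 / (η + β) - 1 / (α + η)) + Lh < 1) :
    ∀ Tf : ℝ, 0 < Tf → ∀ ξ : Hc,
      ∃ (vc : ℝ → Hc) (vs : ℝ → Hs),
        (ContinuousOn vc (Icc 0 Tf) ∧ ContinuousOn vs (Icc 0 Tf) ∧
          ∀ t ∈ Icc (0:ℝ) Tf,
            vc t = Real.exp (∫ s in Tf..t, z s) • Sc (t - Tf) ξ +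
                ∫ τ in Tf..t, Real.exp (∫ s in τ..t, z s) •
                  Sc (t - τ) (gc τ ((WithLp.equiv 2 (Hc × Hs)).symm (vc τ, vs τ))) ∧
            vs t = Real.exp (∫ s in (0:ℝ)..t, z s) • Ss t (h (vc 0)) +
                ∫ τ in (0:ℝ)..t, Real.exp (∫ s in τ..t, z s) •
                  Ss (t - τ) (gs τ ((WithLp.equiv 2 (Hc × Hs)).symm (vc τ, vs τ)))) ∧
        -- uniqueness on `[0, T_f]`
        (∀ (wc : ℝ → Hc) (ws : ℝ → Hs),
          (ContinuousOn wc (Icc 0 Tf) ∧ ContinuousOn ws (Icc 0 Tf) ∧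
            ∀ t ∈ Icc (0:ℝ) Tf,
              wc t = Real.exp (∫ s in Tf..t, z s) • Sc (t - Tf) ξ +
                  ∫ τ in Tf..t, Real.exp (∫ s in τ..t, z s) •
                    Sc (t - τ) (gc τ ((WithLp.equiv 2 (Hc × Hs)).symm (wc τ, ws τ))) ∧
              ws t = Real.exp (∫ s in (0:ℝ)..t, z s) • Ss t (h (wc 0)) +
                  ∫ τ in (0:ℝ)..t, Real.exp (∫ s in τ..t, z s) •
                    Ss (t - τ) (gs τ ((WithLp.equiv 2 (Hc × Hs)).symm (wc τ, ws τ)))) →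
          EqOn vc wc (Icc 0 Tf) ∧ EqOn vs ws (Icc 0 Tf)) := by
  intro Tf hT ξ
  have hβ : 0 < β := hα.trans_lt hαβ
  let Sc' : ℝ → Hc →L[ℝ] Hc := fun t => Sc (min t 0)
  let Ss' : ℝ → Hs →L[ℝ] Hs := fun t => Ss (max t 0)
  have cSc : Continuous fun p : ℝ × Hc => Sc' p.1 p.2 :=
    strong_cont (C := fun t => Real.exp (-α * min t 0))
      (fun x => (hSccont x).comp (continuous_id.min continuous_const)) (by fun_prop)
      (fun t x => hScbnd _ (min_le_right _ _) x)
  have cSs : Continuous fun p : ℝ × Hs => Ss' p.1 p.2 :=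
    strong_cont (C := fun t => Real.exp (-β * max t 0))
      (fun x => (hSscont x).comp_continuous (continuous_id.max continuous_const)
        (fun t => mem_Ici.2 (le_max_right _ _))) (by fun_prop)
      (fun t x => hSsbnd _ (le_max_right _ _) x)
  have eqc : ∀ t ∈ Icc 0 Tf, ∀ f g : ℝ → Hc, (∀ τ ∈ Icc 0 Tf, f τ = g τ) →
      duh z Sc' Tf t ξ f = Real.exp (∫ s in Tf..t, z s) • Sc (t - Tf) ξ +
        ∫ τ in Tf..t, Real.exp (∫ s in τ..t, z s) • Sc (t - τ) (g τ) := by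
    intro t ht f g hfg
    unfold duh
    congr 1
    · simp only [Sc']
      rw [min_eq_left (by linarith [ht.2])]
    · refine intervalIntegral.integral_congr fun τ hτ => ?_
      rw [uIcc_of_ge ht.2] at hτ
      simp only [Sc']
      rw [min_eq_left (by linarith [hτ.1]), hfg τ ⟨ht.1.trans hτ.1, hτ.2⟩]
  have eqs : ∀ t ∈ Icc 0 Tf, ∀ x : Hs, ∀ f g : ℝ → Hs, (∀ τ ∈ Icc 0 Tf, f τ = g τ) →
      duh z Ss' 0 t x f = Real.exp (∫ s in (0:ℝ)..t, z s) • Ss t x +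
        ∫ τ in (0:ℝ)..t, Real.exp (∫ s in τ..t, z s) • Ss (t - τ) (g τ) := by
    intro t ht x f g hfg
    unfold duh
    congr 1
    · simp only [Ss', sub_zero]
      rw [max_eq_left ht.1]
    · refine intervalIntegral.integral_congr fun τ hτ => ?_
      rw [uIcc_of_le ht.1] at hτ
      simp only [Ss']
      rw [max_eq_left (by linarith [hτ.2]), hfg τ ⟨hτ.1, hτ.2.trans ht.2⟩]
  obtain ⟨u, hu, huq⟩ := core_fp α β η hη1 hη2 Sc' cSc
    (fun t ht x => by simp only [Sc']; rw [min_eq_left ht]; exact hScbnd t ht x) Ss' cSs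
    (fun t ht x => by simp only [Ss']; rw [max_eq_left ht]; exact hSsbnd t ht x) z hz L hL gc gs
    hgcCont hgsCont hgcLip hgsLip Lh hLh h hhLip hsmall Tf hT.le ξ
  have cu : Continuous (IccExtend hT.le u) := u.continuous.Icc_extend'
  have cu2 : Continuous fun t => WithLp.ofLp (IccExtend hT.le u t) :=
    (WithLp.prod_continuous_ofLp 2 Hc Hs).comp cu
  refine ⟨fun t => (IccExtend hT.le u t).fst, fun t => (IccExtend hT.le u t).snd,
    ⟨(continuous_fst.comp cu2).continuousOn, (continuous_snd.comp cu2).continuousOn, ?_⟩, ?_⟩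
  · intro t ht
    have := hu ⟨t, ht⟩
    rw [← IccExtend_of_mem hT.le u ht] at this
    refine ⟨this.1.trans (eqc t ht _ _ fun τ _ => rfl), this.2.trans (eqs t ht _ _ _ fun τ _ => rfl)⟩
  · rintro wc ws ⟨hwc, hws, hw⟩
    let v : C(Icc 0 Tf, WithLp 2 (Hc × Hs)) := ⟨fun t => WithLp.toLp 2 (wc t, ws t),
      (WithLp.prod_continuous_toLp 2 Hc Hs).comp
        ((continuousOn_iff_continuous_restrict.1 hwc).prodMk
          (continuousOn_iff_continuous_restrict.1 hws))⟩
    have hv : ∀ t ∈ Icc 0 Tf, IccExtend hT.le v t = WithLp.toLp 2 (wc t, ws t) := fun t ht =>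
      IccExtend_of_mem hT.le v ht
    have huv : u = v := huq v (by
      rintro ⟨t, ht⟩
      have h0 := hv 0 ⟨le_rfl, hT.le⟩
      constructor
      · rw [eqc t ht _ (fun τ => gc τ ((WithLp.equiv 2 (Hc × Hs)).symm (wc τ, ws τ)))
          (fun τ hτ => by rw [hv τ hτ]; rfl)]
        exact (hw t ht).1
      · rw [eqs t ht _ _ (fun τ => gs τ ((WithLp.equiv 2 (Hc × Hs)).symm (wc τ, ws τ)))
          (fun τ hτ => by rw [hv τ hτ]; rfl), h0]
        exact (hw t ht).2)
    subst huv
    constructor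
    · intro t ht
      exact congrArg WithLp.fst (hv t ht)
    · intro t ht
      exact congrArg WithLp.snd (hv t ht)
end
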